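/- Let n ∈ ℕ, σ ∈ {0,1}^n, and N = 2^{n+1}. For every t ∈ [0,1]^2, the local discrepancies of the symmetrized point set R_{n,σ}^{sym} and of the multiset ~R_{n,σ}^{sym} satisfy |D_N(R_{n,σ}^{sym},t) − D_N(~R_{n,σ}^{sym},t)| ≤ 1/2^{n+1}. -/

import Mathlib

open MeasureTheory

/-- The real value of a binary digit. -/
noncomputable def bval (b : Bool) : ℝ := if b then 1 else 0

/-- The two-dimensional digit shifted Hammersley point set with `2^n` points,
indexed by the digit vectors `t : Fin n → Bool`.  The index `i : Fin n`
corresponds to the digit `t_{i+1}` of the paper. -/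
noncomputable def hammersleyShifted (n : ℕ) (σ : Fin n → Bool) (t : Fin n → Bool) : ℝ × ℝ :=
  (∑ i : Fin n, bval (t i) / 2 ^ (n - i.val),
   ∑ i : Fin n, bval (t i != σ i) / 2 ^ (i.val + 1))

/-- Number of points of the (indexed) point set `P` lying in `[0,t₁) × [0,t₂)`. -/
noncomputable def countIn {ι : Type*} [Fintype ι] (P : ι → ℝ × ℝ) (t : ℝ × ℝ) : ℕ :=
  (Finset.univ.filter
    (fun k => 0 ≤ (P k).1 ∧ (P k).1 < t.1 ∧ 0 ≤ (P k).2 ∧ (P k).2 < t.2)).card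

/-- The local discrepancy `D_N(P,t) = A_N([0,t),P)/N - t₁t₂` of an indexed point set. -/
noncomputable def localDisc {ι : Type*} [Fintype ι] (P : ι → ℝ × ℝ) (t : ℝ × ℝ) : ℝ :=
  (countIn P t : ℝ) / (Fintype.card ι) - t.1 * t.2

/-- The `L_p`-discrepancy of an indexed point set. -/
noncomputable def LpDisc (p : ℝ) {ι : Type*} [Fintype ι] (P : ι → ℝ × ℝ) : ℝ :=
  (∫ t in Set.Icc (0 : ℝ × ℝ) 1, |localDisc P t| ^ p) ^ (1 / p)

/-- One-dimensional `L∞`-normalized Haar function `h_{j,m}`, with `j ∈ ℤ`, `j = -1`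
giving the indicator of `[0,1)` and `j ≥ 0` the usual Haar function on `I_{j,m}`. -/
noncomputable def haar1 (j : ℤ) (m : ℕ) (x : ℝ) : ℝ :=
  if j = -1 then (if 0 ≤ x ∧ x < 1 then 1 else 0)
  else if (2 * m : ℝ) / 2 ^ (j.toNat + 1) ≤ x ∧ x < (2 * m + 1 : ℝ) / 2 ^ (j.toNat + 1) then 1
  else if (2 * m + 1 : ℝ) / 2 ^ (j.toNat + 1) ≤ x ∧ x < (2 * m + 2 : ℝ) / 2 ^ (j.toNat + 1) then -1
  else 0

/-- Two-dimensional (tensor product) Haar function. -/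
noncomputable def haar2 (j : ℤ × ℤ) (m : ℕ × ℕ) (x : ℝ × ℝ) : ℝ :=
  haar1 j.1 m.1 x.1 * haar1 j.2 m.2 x.2

/-- One-dimensional dyadic interval `I_{j,m}` (with `I_{-1,0} = [0,1)`). -/
noncomputable def dyadicI (j : ℤ) (m : ℕ) : Set ℝ :=
  if j = -1 then Set.Ico (0 : ℝ) 1
  else Set.Ico ((m : ℝ) / 2 ^ j.toNat) ((m + 1 : ℝ) / 2 ^ j.toNat)

/-- Haar coefficient `μ_{j,m} = ∫_{[0,1]²} D_N(P,t) h_{j,m}(t) dt` of the local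
discrepancy of an indexed point set. -/
noncomputable def haarCoeff {ι : Type*} [Fintype ι] (P : ι → ℝ × ℝ) (j : ℤ × ℤ) (m : ℕ × ℕ) : ℝ :=
  ∫ t in Set.Icc (0 : ℝ × ℝ) 1, localDisc P t * haar2 j m t

/-- Number of zero components of the shift `σ`. -/
noncomputable def zeroCount {n : ℕ} (σ : Fin n → Bool) : ℕ :=
  (Finset.univ.filter (fun j => σ j = false)).card

/-- The symmetrized digit shifted Hammersley point set `R_{n,σ} ∪ R_{n,σ⊕1}`
with `2^(n+1)` points, indexed by `Bool × (Fin n → Bool)`. -/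
noncomputable def hammersleySym (n : ℕ) (σ : Fin n → Bool) :
    Bool × (Fin n → Bool) → ℝ × ℝ :=
  fun bt => if bt.1 then hammersleyShifted n (fun i => !(σ i)) bt.2
            else hammersleyShifted n σ bt.2

/-- The multiset `R_{n,σ} ∪ {(x, 1-y) : (x,y) ∈ R_{n,σ}}` with `2^(n+1)` points
(counted with multiplicity), indexed by `Bool × (Fin n → Bool)`. -/
noncomputable def hammersleySymTilde (n : ℕ) (σ : Fin n → Bool) :
    Bool × (Fin n → Bool) → ℝ × ℝ :=
  fun bt => if bt.1 then ((hammersleyShifted n σ bt.2).1, 1 - (hammersleyShifted n σ bt.2).2)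
            else hammersleyShifted n σ bt.2

/-!
With `σ* = σ ⊕ 1`, the ordinates of the points of `R_{n,σ}` and `R_{n,σ*}` with equal digit vectors
add up to `0.11…1 = 1 - 2⁻ⁿ`. The reflection of `R_{n,σ}` in the line `y = 1/2` is therefore
`R_{n,σ*}` translated upwards by `2⁻ⁿ`. The ordinates of `R_{n,σ*}` are distinct multiples of
`2⁻ⁿ`, so at most one point leaves the box `[0, t)` under this translation, and none enters it.
-/

section CountIn

variable {ι : Type*} [Fintype ι]

lemma localDisc_sub_localDisc (P Q : ι → ℝ × ℝ) (t : ℝ × ℝ) :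
    localDisc P t - localDisc Q t = ((countIn P t : ℝ) - countIn Q t) / Fintype.card ι := by
  rw [localDisc, localDisc, sub_sub_sub_cancel_right, sub_div]

lemma countIn_bool_prod (P : Bool × ι → ℝ × ℝ) (t : ℝ × ℝ) :
    countIn P t = countIn (fun k => P (true, k)) t + countIn (fun k => P (false, k)) t := by
  simp only [countIn, Finset.card_filter, Fintype.sum_prod_type, Fintype.sum_bool]

lemma countIn_vertical_shift_le {P : ι → ℝ × ℝ} {δ : ℝ} (hδ : 0 ≤ δ) (hP : ∀ k, 0 ≤ (P k).2)
    (t : ℝ × ℝ) : countIn (fun k => P k + (0, δ)) t ≤ countIn P t := by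
  refine Finset.card_le_card (Finset.monotone_filter_right _ fun k _ hk => ?_)
  simp only [Prod.fst_add, Prod.snd_add, add_zero] at hk
  exact ⟨hk.1, hk.2.1, hP k, by linarith⟩

lemma countIn_le_countIn_vertical_shift_add_one {P : ι → ℝ × ℝ} {δ : ℝ} (hδ : 0 ≤ δ)
    (hP : Pairwise fun j k => δ ≤ |(P j).2 - (P k).2|) (t : ℝ × ℝ) :
    countIn P t ≤ countIn (fun k => P k + (0, δ)) t + 1 := by
  classical
  rw [← Nat.sub_le_iff_le_add', countIn, countIn]
  refine (Finset.le_card_sdiff _ _).trans (Finset.card_le_one.mpr ?_)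
  simp only [Finset.mem_sdiff, Finset.mem_filter, Finset.mem_univ, true_and, Prod.fst_add,
    Prod.snd_add, add_zero]
  rintro j ⟨⟨hjx, hjx_lt, hjy, hjy_lt⟩, hj_leaves⟩ k ⟨⟨hkx, hkx_lt, hky, hky_lt⟩, hk_leaves⟩
  have hj_ge : t.2 ≤ (P j).2 + δ :=
    not_lt.mp fun h => hj_leaves ⟨hjx, hjx_lt, add_nonneg hjy hδ, h⟩
  have hk_ge : t.2 ≤ (P k).2 + δ :=
    not_lt.mp fun h => hk_leaves ⟨hkx, hkx_lt, add_nonneg hky hδ, h⟩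
  by_contra hjk
  exact (hP hjk).not_gt (abs_sub_lt_iff.mpr ⟨by linarith, by linarith⟩)

end CountIn

section BinaryFraction

variable {n : ℕ}

/-- The binary fraction `0.a₀a₁…aₙ₋₁`; the most significant digit has index `0`. -/
noncomputable def binaryFraction (a : Fin n → Bool) : ℝ :=
  ∑ i : Fin n, bval (a i) / 2 ^ (i.val + 1)

/-- The bijection taking `a` to the integer with binary expansion `a₀a₁…aₙ₋₁`, which is the
numerator of `binaryFraction a` over `2ⁿ`.
The digits are reversed because `finFunctionFinEquiv` reads the least significant one first. -/
def binaryNumerator : (Fin n → Bool) ≃ Fin (2 ^ n) :=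
  (Fin.revPerm.arrowCongr finTwoEquiv.symm).trans finFunctionFinEquiv

lemma binaryFraction_eq_binaryNumerator_div (a : Fin n → Bool) :
    binaryFraction a = ((binaryNumerator a : ℕ) : ℝ) / 2 ^ n := by
  have bval_eq (b : Bool) : bval b = ((finTwoEquiv.symm b : ℕ) : ℝ) := by
    cases b <;> simp [bval, finTwoEquiv]
  have two_pow_div (i : Fin n) : (2 : ℝ) ^ i.val / 2 ^ n = 1 / 2 ^ (i.rev.val + 1) := by
    rw [div_eq_div_iff (by positivity) (by positivity), ← pow_add, Fin.val_rev, one_mul]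
    congr 1
    omega
  have numerator_eq : (binaryNumerator a : ℕ) =
      ∑ i : Fin n, (finTwoEquiv.symm (a i.rev) : ℕ) * 2 ^ i.val :=
    finFunctionFinEquiv_apply _
  calc
    binaryFraction a = ∑ i : Fin n, bval (a i.rev) / 2 ^ (i.rev.val + 1) :=
      (Equiv.sum_comp Fin.revPerm _).symm
    _ = ∑ i : Fin n, ((finTwoEquiv.symm (a i.rev) : ℕ) : ℝ) * 2 ^ i.val / 2 ^ n := by
      simp only [bval_eq, mul_div_assoc, two_pow_div, mul_one_div]
    _ = ((binaryNumerator a : ℕ) : ℝ) / 2 ^ n := by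
      rw [numerator_eq, ← Finset.sum_div]
      norm_cast

lemma binaryFraction_nonneg (a : Fin n → Bool) : 0 ≤ binaryFraction a := by
  rw [binaryFraction_eq_binaryNumerator_div]
  positivity

lemma pairwise_le_abs_binaryFraction_sub :
    Pairwise fun a b : Fin n → Bool => 1 / 2 ^ n ≤ |binaryFraction a - binaryFraction b| := by
  intro a b hab
  have numerator_ne : ((binaryNumerator a : ℕ) : ℤ) - (binaryNumerator b : ℕ) ≠ 0 := by
    rw [sub_ne_zero, Nat.cast_injective.ne_iff, Fin.val_injective.ne_iff]
    exact binaryNumerator.injective.ne hab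
  rw [binaryFraction_eq_binaryNumerator_div, binaryFraction_eq_binaryNumerator_div, ← sub_div,
    abs_div, abs_of_pos (by positivity : (0 : ℝ) < 2 ^ n)]
  gcongr
  exact_mod_cast Int.one_le_abs numerator_ne

lemma sum_one_div_two_pow_succ (n : ℕ) :
    ∑ i : Fin n, (1 : ℝ) / 2 ^ (i.val + 1) = 1 - 1 / 2 ^ n := by
  have telescope (i : ℕ) : (1 : ℝ) / 2 ^ (i + 1) = 1 / 2 ^ i - 1 / 2 ^ (i + 1) := by
    rw [pow_succ]
    ring
  rw [Fin.sum_univ_eq_sum_range fun i => (1 : ℝ) / 2 ^ (i + 1),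
    Finset.sum_congr rfl fun i _ => telescope i, Finset.sum_range_sub', pow_zero, div_one]

lemma binaryFraction_add_binaryFraction_not (a : Fin n → Bool) :
    binaryFraction a + binaryFraction (fun i => !a i) = 1 - 1 / 2 ^ n := by
  have bval_add_bval_not (b : Bool) : bval b + bval (!b) = 1 := by cases b <;> simp [bval]
  simp only [binaryFraction, ← Finset.sum_add_distrib, ← add_div, bval_add_bval_not,
    sum_one_div_two_pow_succ]

end BinaryFraction

section Hammersley

variable {n : ℕ} (σ : Fin n → Bool)

lemma hammersleyShifted_snd (x : Fin n → Bool) :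
    (hammersleyShifted n σ x).2 = binaryFraction fun i => x i != σ i :=
  rfl

lemma hammersleyShifted_snd_nonneg (x : Fin n → Bool) : 0 ≤ (hammersleyShifted n σ x).2 :=
  binaryFraction_nonneg _

lemma pairwise_le_abs_hammersleyShifted_snd_sub :
    Pairwise fun x y =>
      1 / 2 ^ n ≤ |(hammersleyShifted n σ x).2 - (hammersleyShifted n σ y).2| := by
  intro x y hxy
  refine pairwise_le_abs_binaryFraction_sub fun h => hxy (funext fun i => ?_)
  exact Bool.bne_left_inj.mp (congrFun h i)

lemma hammersleyShifted_reflect (x : Fin n → Bool) :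
    ((hammersleyShifted n σ x).1, 1 - (hammersleyShifted n σ x).2) =
      hammersleyShifted n (fun i => !σ i) x + (0, 1 / 2 ^ n) := by
  have flip_digit (i : Fin n) : (x i != !σ i) = !(x i != σ i) := by
    cases x i <;> cases σ i <;> rfl
  refine Prod.ext (add_zero _).symm ?_
  simp only [Prod.snd_add, hammersleyShifted_snd, flip_digit]
  linarith [binaryFraction_add_binaryFraction_not fun i => x i != σ i]

lemma countIn_hammersleySym (t : ℝ × ℝ) :
    countIn (hammersleySym n σ) t =
      countIn (hammersleyShifted n fun i => !σ i) t + countIn (hammersleyShifted n σ) t := by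
  simp [countIn_bool_prod, hammersleySym]

lemma countIn_hammersleySymTilde (t : ℝ × ℝ) :
    countIn (hammersleySymTilde n σ) t =
      countIn (fun x => hammersleyShifted n (fun i => !σ i) x + (0, 1 / 2 ^ n)) t +
        countIn (hammersleyShifted n σ) t := by
  simp only [countIn_bool_prod, hammersleySymTilde, if_true, Bool.false_eq_true, if_false,
    hammersleyShifted_reflect]

lemma countIn_hammersleySymTilde_le (t : ℝ × ℝ) :
    countIn (hammersleySymTilde n σ) t ≤ countIn (hammersleySym n σ) t := by
  rw [countIn_hammersleySym, countIn_hammersleySymTilde]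
  gcongr
  exact countIn_vertical_shift_le (by positivity) (hammersleyShifted_snd_nonneg _) t

lemma countIn_hammersleySym_le_add_one (t : ℝ × ℝ) :
    countIn (hammersleySym n σ) t ≤ countIn (hammersleySymTilde n σ) t + 1 := by
  rw [countIn_hammersleySym, countIn_hammersleySymTilde, add_right_comm]
  gcongr
  exact countIn_le_countIn_vertical_shift_add_one (by positivity)
    (pairwise_le_abs_hammersleyShifted_snd_sub _) t

end Hammersley

theorem statement17_general (n : ℕ) (σ : Fin n → Bool) (t : ℝ × ℝ) :
    localDisc (hammersleySym n σ) t - localDisc (hammersleySymTilde n σ) t ∈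
      Set.Icc (0 : ℝ) (1 / 2 ^ (n + 1)) := by
  have card_index : (Fintype.card (Bool × (Fin n → Bool)) : ℝ) = 2 ^ (n + 1) := by
    simp [pow_succ']
  have count_ge : (countIn (hammersleySymTilde n σ) t : ℝ) ≤ countIn (hammersleySym n σ) t :=
    mod_cast countIn_hammersleySymTilde_le σ t
  have count_le : (countIn (hammersleySym n σ) t : ℝ) ≤ countIn (hammersleySymTilde n σ) t + 1 :=
    mod_cast countIn_hammersleySym_le_add_one σ t
  rw [localDisc_sub_localDisc, card_index]
  constructor
  · exact div_nonneg (sub_nonneg.mpr count_ge) (by positivity)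
  · gcongr
    exact sub_left_le_of_le_add count_le

/-- The local discrepancies of `R_{n,σ}^{sym}` and of the multiset `~R_{n,σ}^{sym}`
differ pointwise by at most `2^{-(n+1)}`. -/
theorem statement17 (n : ℕ) (hn : 0 < n) (σ : Fin n → Bool)
    (t : ℝ × ℝ) (ht : t ∈ Set.Icc (0 : ℝ × ℝ) 1) :
    |localDisc (hammersleySym n σ) t - localDisc (hammersleySymTilde n σ) t| ≤
      1 / 2 ^ (n + 1) := by
  obtain ⟨h_nonneg, h_le⟩ := statement17_general n σ t
  rwa [abs_of_nonneg h_nonneg]
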